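/- Let m ≥ 1 and let S ⊆ ℝ^m be a convex set. If r ∈ S is Pareto optimal in S, then there exists a preference vector λ in the simplex Δ_{m-1} (i.e., λ_i ≥ 0 for all i and ∑_{i=1}^m λ_i = 1) such that ⟨λ, r⟩ ≥ ⟨λ, r'⟩ for all r' ∈ S. (Consequently, under a convex objective space, the Pareto front F* equals the convex coverage set CCS.) -/

import Mathlib

/-!
If no point of the convex set `S` beats `r` in every coordinate (weak Pareto optimality), then `S`
misses the interior of the orthant `Ici r`, so a nonzero linear functional separates the two. Its
lower bound on the orthant makes it nonnegative on nonnegative vectors; hence its coefficients,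
divided by their sum, form a preference vector. As `r` itself lies in the orthant, its weighted
value bounds those of the points of `S`.
-/

theorem nonneg_of_bddBelow_image_Ici {𝕜 E : Type*} [Field 𝕜] [LinearOrder 𝕜]
    [IsStrictOrderedRing 𝕜] [AddCommMonoid E] [Preorder E] [IsOrderedAddMonoid E] [Module 𝕜 E]
    [PosSMulMono 𝕜 E] (f : E →ₗ[𝕜] 𝕜) {r d : E} (hf : BddBelow (f '' Set.Ici r)) (hd : 0 ≤ d) :
    0 ≤ f d := by
  obtain ⟨u, hu⟩ := hf
  have bound_on_ray {t : 𝕜} (ht : 0 ≤ t) : u ≤ f r + t * f d := by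
    simpa only [map_add, map_smul, smul_eq_mul] using
      hu (Set.mem_image_of_mem f (Set.mem_Ici.2 (le_add_of_nonneg_right (smul_nonneg ht hd))))
  by_contra! hneg
  have hr : u ≤ f r := hu (Set.mem_image_of_mem f Set.self_mem_Ici)
  -- At this value of `t` the functional equals `u - 1`.
  have hray := bound_on_ray (t := (u - 1 - f r) / f d)
    (div_nonneg_of_nonpos (by linarith) hneg.le)
  rw [div_mul_cancel₀ _ hneg.ne] at hray
  linarith

theorem exists_nonneg_functional_le_of_disjoint_interior_Ici {E : Type*} [AddCommGroup E]
    [PartialOrder E] [IsOrderedAddMonoid E] [Module ℝ E] [PosSMulMono ℝ E] [TopologicalSpace E]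
    [IsTopologicalAddGroup E] [ContinuousSMul ℝ E] {S : Set E} {r : E} (hS : Convex ℝ S)
    (hne : S.Nonempty) (hint : (interior (Set.Ici r)).Nonempty)
    (hdisj : Disjoint (interior (Set.Ici r)) S) :
    ∃ f : StrongDual ℝ E, f ≠ 0 ∧ (∀ d, 0 ≤ d → 0 ≤ f d) ∧ ∀ x ∈ S, f x ≤ f r := by
  obtain ⟨g, u, hg, hIci, hgS⟩ :=
    geometric_hahn_banach_of_nonempty_interior (convex_Ici r) hS hdisj hint hne
  have hbdd : BddBelow ((-g : StrongDual ℝ E).toLinearMap '' Set.Ici r) :=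
    ⟨-u, Set.forall_mem_image.2 fun x hx => neg_le_neg (hIci x hx)⟩
  exact ⟨-g, neg_ne_zero.2 hg, fun d hd => nonneg_of_bddBelow_image_Ici _ hbdd hd,
    fun x hx => neg_le_neg ((hIci r Set.self_mem_Ici).trans (hgS x hx))⟩

theorem inv_sum_smul_mem_stdSimplex {𝕜 ι : Type*} [Field 𝕜] [LinearOrder 𝕜]
    [IsStrictOrderedRing 𝕜] [Fintype ι] {w : ι → 𝕜} (hw : 0 < w) :
    (∑ i, w i)⁻¹ • w ∈ stdSimplex 𝕜 ι := by
  have hsum : 0 < ∑ i, w i := Fintype.sum_pos hw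
  refine ⟨fun i => mul_nonneg (inv_nonneg.2 hsum.le) (hw.le i), ?_⟩
  simp only [Pi.smul_apply, smul_eq_mul, ← Finset.mul_sum, inv_mul_cancel₀ hsum.ne']

theorem exists_pos_eq_dotProduct_of_nonneg {R ι : Type*} [CommSemiring R] [PartialOrder R]
    [ZeroLEOneClass R] [Fintype ι] {f : (ι → R) →ₗ[R] R} (hf : f ≠ 0)
    (hnonneg : ∀ d, 0 ≤ d → 0 ≤ f d) : ∃ w : ι → R, 0 < w ∧ ∀ x, f x = w ⬝ᵥ x := by
  classical
  obtain ⟨w, rfl⟩ := (dotProductEquiv R ι).surjective f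
  refine ⟨w, lt_of_le_of_ne (fun i => ?_) fun hw => hf ?_, fun x => rfl⟩
  · simpa using hnonneg (Pi.single i 1) (Pi.single_nonneg.2 zero_le_one)
  · rw [← hw, map_zero]

theorem interior_Ici_pi {ι : Type*} [Finite ι] {α : ι → Type*} [∀ i, LinearOrder (α i)]
    [∀ i, TopologicalSpace (α i)] [∀ i, OrderTopology (α i)] [∀ i, DenselyOrdered (α i)]
    [∀ i, NoMinOrder (α i)] (r : ∀ i, α i) :
    interior (Set.Ici r) = {x | StrongLT r x} := by
  rw [← Set.pi_univ_Ici, interior_pi_set Set.finite_univ]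
  ext x
  simp only [interior_Ici, Set.mem_univ_pi, Set.mem_Ioi, Set.mem_ofPred_eq, StrongLT]

theorem pareto_optimal_of_convex_exists_simplex_supporting_weight_general {ι : Type*} [Fintype ι]
    [Nonempty ι] {S : Set (ι → ℝ)} (hS : Convex ℝ S) {r : ι → ℝ}
    (hr : ∀ x ∈ S, ¬ StrongLT r x) :
    ∃ lam ∈ stdSimplex ℝ ι, ∀ x ∈ S, lam ⬝ᵥ x ≤ lam ⬝ᵥ r := by
  classical
  obtain rfl | hne := S.eq_empty_or_nonempty
  · exact ⟨Pi.single (Classical.arbitrary ι) 1, single_mem_stdSimplex ℝ _, by simp⟩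
  have hint : (interior (Set.Ici r)).Nonempty := by
    rw [interior_Ici_pi]
    exact ⟨r + 1, fun i => lt_add_one (r i)⟩
  have hdisj : Disjoint (interior (Set.Ici r)) S := by
    rw [interior_Ici_pi]
    exact Set.disjoint_right.2 hr
  obtain ⟨f, hf, hnonneg, hle⟩ :=
    exists_nonneg_functional_le_of_disjoint_interior_Ici hS hne hint hdisj
  obtain ⟨w, hw, hfw⟩ := exists_pos_eq_dotProduct_of_nonneg
    (f := f.toLinearMap) (ContinuousLinearMap.coe_injective.ne hf) hnonneg
  refine ⟨(∑ i, w i)⁻¹ • w, inv_sum_smul_mem_stdSimplex hw, fun x hx => ?_⟩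
  have hwx : w ⬝ᵥ x ≤ w ⬝ᵥ r := (hfw x).symm.trans_le ((hle x hx).trans_eq (hfw r))
  simpa only [smul_dotProduct] using
    smul_le_smul_of_nonneg_left hwx (inv_nonneg.2 (Fintype.sum_pos hw).le)

/-- If `S ⊆ ℝ^m` is convex and `r ∈ S` is Pareto optimal in `S`
(no `r' ∈ S` dominates `r`), then there is a preference vector `lam` in the
simplex `Δ_{m-1}` with `⟨lam, r⟩ ≥ ⟨lam, r'⟩` for all `r' ∈ S`. -/
theorem pareto_optimal_of_convex_exists_simplex_supporting_weight
    (m : ℕ) (hm : 1 ≤ m) (S : Set (Fin m → ℝ)) (hS : Convex ℝ S)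
    (r : Fin m → ℝ) (hr : r ∈ S)
    (hpareto : ¬ ∃ r' ∈ S, (∀ i, r i ≤ r' i) ∧ ∃ j, r j < r' j) :
    ∃ lam : Fin m → ℝ, (∀ i, 0 ≤ lam i) ∧ (∑ i, lam i = 1) ∧
      ∀ r' ∈ S, ∑ i, lam i * r' i ≤ ∑ i, lam i * r i := by
  have : Nonempty (Fin m) := ⟨⟨0, hm⟩⟩
  obtain ⟨lam, ⟨hlam, hsum⟩, hle⟩ :=
    pareto_optimal_of_convex_exists_simplex_supporting_weight_general hS
      fun x hx hlt => hpareto ⟨x, hx, hlt.le, ⟨0, hm⟩, hlt _⟩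
  exact ⟨lam, hlam, hsum, hle⟩
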